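/- Let A = (Q, X, q₀, T, F) be an updateable timed automaton in which guards may contain diagonal constraints and every atomic update is of the form x := c or x := y. Then the least solution {G(q)}_{q ∈ Q} of the state-based guard equations for updateable timed automata is finite: every constraint occurring in any G(q) is either a diagonal constraint whose constant already occurs in a guard of A, or a non-diagonal constraint with constant at most 2M, where M is the maximum absolute value of a constant occurring in a guard or update of A, so each G(q) is a finite set. -/

import Mathlib

open scoped NNReal

/-! ## Atomic constraints over a set of clocks -/

/-- Comparison operator `◁ ∈ {<, ≤}`. -/
inductive Ineq : Type where
  | lt : Ineq
  | le : Ineq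
deriving DecidableEq

/-- Interpretation of a comparison operator on reals. -/
def Ineq.holds : Ineq → ℝ → ℝ → Prop
  | .lt, a, b => a < b
  | .le, a, b => a ≤ b

/-- Atomic constraints over clocks `X`:
`upper x o c` is `x ◁ c` (c ∈ ℕ), `lower c o x` is `c ◁ x` (c ∈ ℕ),
`diag x y o d` is `x - y ◁ d` (d ∈ ℤ). -/
inductive Constr (X : Type) : Type where
  | upper : X → Ineq → ℕ → Constr X
  | lower : ℕ → Ineq → X → Constr X
  | diag : X → X → Ineq → ℤ → Constr X
deriving DecidableEq

namespace Constr

/-- Is the constraint a diagonal constraint `x - y ◁ d`? -/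
def isDiag {X : Type} : Constr X → Bool
  | .diag _ _ _ _ => true
  | _ => false

/-- The integer constant of a constraint. -/
def constOf {X : Type} : Constr X → ℤ
  | .upper _ _ c => (c : ℤ)
  | .lower c _ _ => (c : ℤ)
  | .diag _ _ _ d => d

/-- Satisfaction of a constraint by a clock valuation `v : X → ℝ≥0`. -/
def sat {X : Type} (v : X → ℝ≥0) : Constr X → Prop
  | .upper x o c => o.holds (v x : ℝ) (c : ℝ)
  | .lower c o x => o.holds (c : ℝ) (v x : ℝ)
  | .diag x y o d => o.holds ((v x : ℝ) - (v y : ℝ)) (d : ℝ)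

end Constr

/-- Time elapse: `v + δ`. -/
def shift {X : Type} (v : X → ℝ≥0) (δ : ℝ≥0) : X → ℝ≥0 := fun x => v x + δ

/-- The relation `v ⊑_G v'`: for all `φ ∈ G` and all delays `δ ≥ 0`,
`v + δ ⊨ φ` implies `v' + δ ⊨ φ`. -/
def simG {X : Type} (G : Set (Constr X)) (v v' : X → ℝ≥0) : Prop :=
  ∀ φ ∈ G, ∀ δ : ℝ≥0, Constr.sat (shift v δ) φ → Constr.sat (shift v' δ) φ

/-- `Z ⊑_G Z'` on sets of valuations. -/
def simGZ {X : Type} (G : Set (Constr X)) (Z Z' : Set (X → ℝ≥0)) : Prop :=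
  ∀ v ∈ Z, ∃ v' ∈ Z', simG G v v'

open Classical in
/-- `[R]v`: reset the clocks in `R` to `0`. -/
noncomputable def reset {X : Type} (R : Set X) (v : X → ℝ≥0) : X → ℝ≥0 :=
  fun x => if x ∈ R then 0 else v x

/-- Weakest precondition `wp(⊑_φ, R)` of a single constraint over a reset. -/
def wpReset {X : Type} (R : Set X) : Constr X → Set (Constr X)
  | .upper x o c => {ψ | x ∉ R ∧ ψ = .upper x o c}
  | .lower c o x => {ψ | x ∉ R ∧ ψ = .lower c o x}
  | .diag x y o d =>
      {ψ | (x ∉ R ∧ y ∉ R ∧ ψ = .diag x y o d) ∨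
           (x ∉ R ∧ y ∈ R ∧ 0 ≤ d ∧ ψ = .upper x o d.toNat) ∨
           (x ∈ R ∧ y ∉ R ∧ 0 ≤ -d ∧ ψ = .lower (-d).toNat o y)}

/-- Weakest precondition `wp(⊑_G, R)` of a set of constraints over a reset. -/
def wpResetSet {X : Type} (R : Set X) (G : Set (Constr X)) : Set (Constr X) :=
  ⋃ φ ∈ G, wpReset R φ

/-! ## Timed automata -/

/-- A transition: source state, guard (finite conjunction of constraints),
reset set, target state. -/
abbrev TTrans (Q X : Type) : Type := Q × Finset (Constr X) × Set X × Q

def TTrans.src {Q X : Type} (t : TTrans Q X) : Q := t.1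
def TTrans.grd {Q X : Type} (t : TTrans Q X) : Finset (Constr X) := t.2.1
def TTrans.rst {Q X : Type} (t : TTrans Q X) : Set X := t.2.2.1
def TTrans.tgt {Q X : Type} (t : TTrans Q X) : Q := t.2.2.2

/-- A timed automaton. -/
structure TA (Q X : Type) : Type where
  init : Q
  trans : Finset (TTrans Q X)
  acc : Set Q

/-- Action step of a timed automaton along transition `t`. -/
def Step {Q X : Type} (A : TA Q X) (t : TTrans Q X) (c c' : Q × (X → ℝ≥0)) : Prop :=
  t ∈ A.trans ∧ TTrans.src t = c.1 ∧ (∀ φ ∈ TTrans.grd t, Constr.sat c.2 φ) ∧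
    c'.1 = TTrans.tgt t ∧ c'.2 = reset (TTrans.rst t) c.2

/-- `r` is a simulation on the configurations of `A`: a reflexive transitive
relation, relating only configurations with equal states, compatible with
delays and action transitions. -/
def IsSimulation {Q X : Type} (A : TA Q X)
    (r : (Q × (X → ℝ≥0)) → (Q × (X → ℝ≥0)) → Prop) : Prop :=
  Reflexive r ∧ Transitive r ∧
  ∀ q v q' v', r (q, v) (q', v') →
    q = q' ∧
    (∀ δ : ℝ≥0, ∃ δ' : ℝ≥0, r (q, shift v δ) (q, shift v' δ')) ∧
    (∀ t c₁, Step A t (q, v) c₁ →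
      ∃ v₁', Step A t (q, v') (c₁.1, v₁') ∧ r c₁ (c₁.1, v₁'))

/-- The state-based guard equations:
`G(q) = ⋃_{(q,g,R,q₁) ∈ T} ({g} ∪ wp(⊑_{G(q₁)}, R))`. -/
def GuardEq {Q X : Type} (A : TA Q X) (G : Q → Set (Constr X)) : Prop :=
  ∀ q, G q = ⋃ t ∈ A.trans, ⋃ (_ : TTrans.src t = q),
    ((TTrans.grd t : Set (Constr X)) ∪ wpResetSet (TTrans.rst t) (G (TTrans.tgt t)))

/-! ## LU bounds -/

def lowerConstAt {X : Type} [DecidableEq X] (x : X) : Constr X → WithBot ℕ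
  | .lower c _ y => if y = x then (c : WithBot ℕ) else ⊥
  | _ => ⊥

def upperConstAt {X : Type} [DecidableEq X] (x : X) : Constr X → WithBot ℕ
  | .upper y _ c => if y = x then (c : WithBot ℕ) else ⊥
  | _ => ⊥

/-- `L_G(x)`: maximum constant among lower-bound constraints `c ◁ x` in `G`
(`⊥ = -∞` if none). -/
def Lbound {X : Type} [DecidableEq X] (G : Finset (Constr X)) (x : X) : WithBot ℕ :=
  G.sup (lowerConstAt x)

/-- `U_G(x)`: maximum constant among upper-bound constraints `x ◁ c` in `G`
(`⊥ = -∞` if none). -/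
def Ubound {X : Type} [DecidableEq X] (G : Finset (Constr X)) (x : X) : WithBot ℕ :=
  G.sup (upperConstAt x)

/-- The LU simulation `v ≼_LU v'` for bounds functions `L U : X → ℕ ∪ {-∞}`. -/
def luSim {X : Type} (L U : X → WithBot ℕ) (v v' : X → ℝ≥0) : Prop :=
  ∀ x : X,
    (v' x < v x → (L x).map (fun c : ℕ => (c : ℝ)) < ((v' x : ℝ) : WithBot ℝ)) ∧
    (v x < v' x → (U x).map (fun c : ℕ => (c : ℝ)) < ((v x : ℝ) : WithBot ℝ))

/-- The relation `v ⊑^LU_G v'`: `v ≼_{LU(G)} v'` and every diagonal constraint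
of `G` satisfied by `v` is satisfied by `v'`. -/
def luglu {X : Type} [DecidableEq X] (G : Finset (Constr X)) (v v' : X → ℝ≥0) : Prop :=
  luSim (Lbound G) (Ubound G) v v' ∧
    ∀ φ ∈ G, φ.isDiag → Constr.sat v φ → Constr.sat v' φ

/-- Lifting a relation on valuations to sets of valuations. -/
def zoneRel {X : Type} (r : (X → ℝ≥0) → (X → ℝ≥0) → Prop) (Z Z' : Set (X → ℝ≥0)) : Prop :=
  ∀ v ∈ Z, ∃ v' ∈ Z', r v v'

/-! ## Runs of timed automata -/

/-- `stepsFrom A c l`: the alternating delay-action sequence `l` is a valid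
sequence of steps of `A` starting at configuration `c`. -/
def stepsFrom {Q X : Type} (A : TA Q X) :
    (Q × (X → ℝ≥0)) → List (ℝ≥0 × TTrans Q X) → Prop
  | _, [] => True
  | c, (δ, t) :: l =>
      t ∈ A.trans ∧ TTrans.src t = c.1 ∧
      (∀ φ ∈ TTrans.grd t, Constr.sat (shift c.2 δ) φ) ∧
      stepsFrom A (TTrans.tgt t, reset (TTrans.rst t) (shift c.2 δ)) l

/-- Configuration reached after a sequence of delay-action steps. -/
noncomputable def endConfig {Q X : Type} :
    (Q × (X → ℝ≥0)) → List (ℝ≥0 × TTrans Q X) → (Q × (X → ℝ≥0))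
  | c, [] => c
  | c, (δ, t) :: l => endConfig (TTrans.tgt t, reset (TTrans.rst t) (shift c.2 δ)) l

/-- A run of `A`: a valid sequence of delay-action steps from `(q₀, 0̄)`. -/
def TA.Run {Q X : Type} (A : TA Q X) : Type :=
  {l : List (ℝ≥0 × TTrans Q X) // stepsFrom A (A.init, fun _ => 0) l}

/-- A run is accepting if it ends in an accepting state. -/
def TA.Accepting {Q X : Type} (A : TA Q X) (r : A.Run) : Prop :=
  (endConfig (A.init, fun _ => 0) r.val).1 ∈ A.acc

/-- `A` is diagonal-free: no guard contains a diagonal constraint. -/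
def DiagFree {Q X : Type} (A : TA Q X) : Prop :=
  ∀ t ∈ A.trans, ∀ φ ∈ TTrans.grd t, ¬ φ.isDiag

/-- The (finite) set of diagonal constraints occurring in guards of `A`. -/
def diagGuards {Q X : Type} [DecidableEq X] (A : TA Q X) : Finset (Constr X) :=
  A.trans.biUnion fun t => (TTrans.grd t).filter fun φ => φ.isDiag

/-! ## Updateable timed automata -/

/-- Atomic update of a clock: `x := c` or `x := y + d`. -/
inductive AtomicUp (X : Type) : Type where
  | const : ℕ → AtomicUp X
  | add : X → ℤ → AtomicUp X
deriving DecidableEq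

/-- `up(v) : X → ℝ` (may be negative). -/
def applyUpd {X : Type} (up : X → AtomicUp X) (v : X → ℝ≥0) : X → ℝ :=
  fun x => match up x with
    | .const c => (c : ℝ)
    | .add y d => (v y : ℝ) + (d : ℝ)

/-- Weakest precondition `wp(⊑_φ, up)` of a single constraint over an update. -/
def wpUpd {X : Type} [DecidableEq X] (up : X → AtomicUp X) : Constr X → Set (Constr X)
  | .upper x o c =>
      match up x with
      | .const _ => ∅
      | .add y d => if 0 ≤ (c : ℤ) - d then {Constr.upper y o ((c : ℤ) - d).toNat} else ∅
  | .lower c o x =>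
      match up x with
      | .const _ => ∅
      | .add y d => if 0 ≤ (c : ℤ) - d then {Constr.lower ((c : ℤ) - d).toNat o y} else ∅
  | .diag x y o c =>
      match up x, up y with
      | .const _, .const _ => ∅
      | .add y₁ d₁, .const c₂ =>
          if 0 ≤ c + (c₂ : ℤ) - d₁ then {Constr.upper y₁ o (c + (c₂ : ℤ) - d₁).toNat} else ∅
      | .const c₁, .add y₂ d₂ =>
          if 0 ≤ (c₁ : ℤ) - d₂ - c then {Constr.lower ((c₁ : ℤ) - d₂ - c).toNat o y₂} else ∅
      | .add y₁ d₁, .add y₂ d₂ =>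
          if y₁ = y₂ then ∅ else {Constr.diag y₁ y₂ o (c - d₁ + d₂)}

/-- Weakest precondition `wp(⊑_G, up)` of a set of constraints over an update. -/
def wpUpdSet {X : Type} [DecidableEq X] (up : X → AtomicUp X) (G : Set (Constr X)) :
    Set (Constr X) :=
  ⋃ φ ∈ G, wpUpd up φ

/-- The set of constraints `{0 ≤ x | x ∈ X}`. -/
def nonnegConstrs (X : Type) : Set (Constr X) := {φ | ∃ x : X, φ = Constr.lower 0 Ineq.le x}

/-- A transition of an updateable timed automaton: source, guard, update, target. -/
abbrev UTrans (Q X : Type) : Type := Q × Finset (Constr X) × (X → AtomicUp X) × Q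

def UTrans.src {Q X : Type} (t : UTrans Q X) : Q := t.1
def UTrans.grd {Q X : Type} (t : UTrans Q X) : Finset (Constr X) := t.2.1
def UTrans.upd {Q X : Type} (t : UTrans Q X) : X → AtomicUp X := t.2.2.1
def UTrans.tgt {Q X : Type} (t : UTrans Q X) : Q := t.2.2.2

/-- An updateable timed automaton. -/
structure UTA (Q X : Type) : Type where
  init : Q
  trans : Finset (UTrans Q X)
  acc : Set Q

/-- Action step of an updateable timed automaton along transition `t`:
the guard holds, `up(v) ≥ 0`, and the new valuation is `up(v)`. -/
def UStep {Q X : Type} (A : UTA Q X) (t : UTrans Q X) (c c' : Q × (X → ℝ≥0)) : Prop :=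
  t ∈ A.trans ∧ UTrans.src t = c.1 ∧ (∀ φ ∈ UTrans.grd t, Constr.sat c.2 φ) ∧
    c'.1 = UTrans.tgt t ∧ ∀ x, (c'.2 x : ℝ) = applyUpd (UTrans.upd t) c.2 x

/-- `r` is a simulation on configurations of an updateable timed automaton. -/
def IsSimulationU {Q X : Type} (A : UTA Q X)
    (r : (Q × (X → ℝ≥0)) → (Q × (X → ℝ≥0)) → Prop) : Prop :=
  Reflexive r ∧ Transitive r ∧
  ∀ q v q' v', r (q, v) (q', v') →
    q = q' ∧
    (∀ δ : ℝ≥0, ∃ δ' : ℝ≥0, r (q, shift v δ) (q, shift v' δ')) ∧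
    (∀ t c₁, UStep A t (q, v) c₁ →
      ∃ v₁', UStep A t (q, v') (c₁.1, v₁') ∧ r c₁ (c₁.1, v₁'))

/-- State-based guard equations for updateable timed automata. -/
def GuardEqU {Q X : Type} [DecidableEq X] (A : UTA Q X) (G : Q → Set (Constr X)) : Prop :=
  ∀ q, G q = ⋃ t ∈ A.trans, ⋃ (_ : UTrans.src t = q),
    ((UTrans.grd t : Set (Constr X)) ∪ wpUpdSet (UTrans.upd t) (nonnegConstrs X)
      ∪ wpUpdSet (UTrans.upd t) (G (UTrans.tgt t)))

/-- Kleene iterates `G^i(q)` of the state-based guard equations. -/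
def iterG {Q X : Type} [DecidableEq X] (A : UTA Q X) : ℕ → Q → Set (Constr X)
  | 0 => fun q => ⋃ t ∈ A.trans, ⋃ (_ : UTrans.src t = q),
      ((UTrans.grd t : Set (Constr X)) ∪ wpUpdSet (UTrans.upd t) (nonnegConstrs X))
  | (i + 1) => fun q => iterG A i q ∪
      (⋃ t ∈ A.trans, ⋃ (_ : UTrans.src t = q),
        wpUpdSet (UTrans.upd t) (iterG A i (UTrans.tgt t)))

/-- `G^{i+1}(q)` is coloured red: a new diagonal constraint was added, or a new
non-diagonal constraint whose constant is strictly bigger than the constant of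
every non-diagonal constraint of the same kind on the same clock in `G^i(q)`. -/
def RedAt {Q X : Type} [DecidableEq X] (A : UTA Q X) : ℕ → Q → Prop
  | 0, _ => False
  | (i + 1), q =>
      (∃ φ : Constr X, φ ∈ iterG A (i + 1) q ∧ φ ∉ iterG A i q ∧ φ.isDiag) ∨
      (∃ (x : X) (o : Ineq) (c : ℕ),
        Constr.upper x o c ∈ iterG A (i + 1) q ∧ Constr.upper x o c ∉ iterG A i q ∧
        ∀ (o' : Ineq) (c' : ℕ), Constr.upper x o' c' ∈ iterG A i q → c' < c) ∨
      (∃ (x : X) (o : Ineq) (c : ℕ),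
        Constr.lower c o x ∈ iterG A (i + 1) q ∧ Constr.lower c o x ∉ iterG A i q ∧
        ∀ (o' : Ineq) (c' : ℕ), Constr.lower c' o' x ∈ iterG A i q → c' < c)

/-- `G^i(q)` is coloured green. -/
def GreenAt {Q X : Type} [DecidableEq X] (A : UTA Q X) (i : ℕ) (q : Q) : Prop :=
  ¬ RedAt A i q

/-- Absolute value of the constant of an atomic update. -/
def updBound {X : Type} : AtomicUp X → ℕ
  | .const c => c
  | .add _ d => d.natAbs

/-! ## The statement -/

/-!
By the Knaster–Tarski theorem the least solution of the guard equations lies below every family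
that is closed under them, so it suffices to find a finite closed set of constraints. Updates of
the form `x := c` and `x := y` can only rename the clocks of a constraint, which keeps its constant,
or turn a diagonal constraint `x - y ◁ d` into a non-diagonal one with constant `d + c` or `c - d`.
The latter happens at most once along any derivation, since no non-diagonal constraint ever becomes
diagonal again. Hence the diagonal constraints with a constant from a guard, together with the
non-diagonal constraints with constant at most `2M`, form a closed set.
-/

/-- The monotone operator on families of constraint sets given by the right-hand sides of the
state-based guard equations; bundled as an order homomorphism so that the fixed-point theory of
`OrderHom.lfp` applies. -/
def guardHom {Q X : Type} [DecidableEq X] (A : UTA Q X) :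
    (Q → Set (Constr X)) →o (Q → Set (Constr X)) where
  toFun G q := ⋃ t ∈ A.trans, ⋃ (_ : UTrans.src t = q),
    ((UTrans.grd t : Set (Constr X)) ∪ wpUpdSet (UTrans.upd t) (nonnegConstrs X)
      ∪ wpUpdSet (UTrans.upd t) (G (UTrans.tgt t)))
  monotone' _ _ hGG' _ := Set.iUnion₂_mono fun _ _ => Set.iUnion_mono fun _ =>
    Set.union_subset_union_right _ (Set.biUnion_mono (hGG' _) fun _ _ => subset_rfl)

/-- The set of constants occurring in guards of `A`. -/
def guardConsts {Q X : Type} (A : UTA Q X) : Set ℤ :=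
  ⋃ t ∈ A.trans, Constr.constOf '' (UTrans.grd t : Set (Constr X))

/-- The constraints whose constant lies in `D` if they are diagonal, and is at most `N` if they are
not. For suitable `D` and `N` this is the invariant containing the least solution of the guard
equations. -/
def boundedConstrs (X : Type) (D : Set ℤ) (N : ℕ) : Set (Constr X) :=
  {φ | (φ.isDiag → φ.constOf ∈ D) ∧ (¬ φ.isDiag → φ.constOf.natAbs ≤ N)}

/-- The atomic updates of the form `x := c` or `x := y`, that is, those that do not shift the value
of a clock. -/
def AtomicUp.IsShiftFree {X : Type} (u : AtomicUp X) : Prop :=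
  (∃ c : ℕ, u = .const c) ∨ ∃ y : X, u = .add y 0

section LeastSolution

variable {Q X : Type} [DecidableEq X] {A : UTA Q X} {G : Q → Set (Constr X)}

theorem guardEqU_iff_guardHom_eq : GuardEqU A G ↔ guardHom A G = G :=
  funext_iff.symm.trans eq_comm

theorem eq_lfp_guardHom_of_isLeast (hG : IsLeast {G | GuardEqU A G} G) :
    G = (guardHom A).lfp := by
  simp only [guardEqU_iff_guardHom_eq] at hG
  exact hG.unique (guardHom A).isLeast_lfp

theorem subset_of_isLeast_guardEqU (hG : IsLeast {G | GuardEqU A G} G) {B : Set (Constr X)}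
    (hgrd : ∀ t ∈ A.trans, (UTrans.grd t : Set (Constr X)) ⊆ B) (hnonneg : nonnegConstrs X ⊆ B)
    (hwp : ∀ t ∈ A.trans, ∀ φ ∈ B, wpUpd (UTrans.upd t) φ ⊆ B) (q : Q) : G q ⊆ B := by
  have hclosed : guardHom A (fun _ => B) ≤ fun _ => B := fun _ =>
    Set.iUnion₂_subset fun t ht => Set.iUnion_subset fun _ =>
      Set.union_subset
        (Set.union_subset (hgrd t ht) (Set.iUnion₂_subset fun φ hφ => hwp t ht φ (hnonneg hφ)))
        (Set.iUnion₂_subset (hwp t ht))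
  rw [eq_lfp_guardHom_of_isLeast hG]
  exact (guardHom A).lfp_le hclosed q

end LeastSolution

section WeakestPrecondition

variable {X : Type} [DecidableEq X] {up : X → AtomicUp X} {φ ψ : Constr X}

theorem isDiag_of_mem_wpUpd (hψ : ψ ∈ wpUpd up φ) (hdiag : ψ.isDiag) : φ.isDiag := by
  cases φ <;> grind [wpUpd, Constr.isDiag]

theorem constOf_eq_of_mem_wpUpd (hup : ∀ x, (up x).IsShiftFree) (hψ : ψ ∈ wpUpd up φ)
    (hkind : ψ.isDiag = φ.isDiag) : ψ.constOf = φ.constOf := by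
  cases φ <;> grind [wpUpd, Constr.isDiag, Constr.constOf, AtomicUp.IsShiftFree]

theorem natAbs_constOf_le_of_mem_wpUpd {L : ℕ} (hup : ∀ x, (up x).IsShiftFree)
    (hL : ∀ x, updBound (up x) ≤ L) (hψ : ψ ∈ wpUpd up φ) :
    ψ.constOf.natAbs ≤ φ.constOf.natAbs + L := by
  cases φ <;> grind [wpUpd, Constr.constOf, AtomicUp.IsShiftFree, updBound]

theorem wpUpd_subset_boundedConstrs {D : Set ℤ} {L N : ℕ} (hup : ∀ x, (up x).IsShiftFree)
    (hL : ∀ x, updBound (up x) ≤ L) (hD : ∀ d ∈ D, d.natAbs + L ≤ N)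
    (hφ : φ ∈ boundedConstrs X D N) : wpUpd up φ ⊆ boundedConstrs X D N := by
  intro ψ hψ
  constructor
  · intro hψdiag
    have hφdiag := isDiag_of_mem_wpUpd hψ hψdiag
    rw [constOf_eq_of_mem_wpUpd hup hψ (hψdiag.trans hφdiag.symm)]
    exact hφ.1 hφdiag
  · intro hψdiag
    by_cases hφdiag : φ.isDiag
    · exact (natAbs_constOf_le_of_mem_wpUpd hup hL hψ).trans (hD _ (hφ.1 hφdiag))
    · rw [constOf_eq_of_mem_wpUpd hup hψ (by simp only [hψdiag, hφdiag])]
      exact hφ.2 hφdiag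

end WeakestPrecondition

section Finiteness

variable {X : Type}

instance : Fintype Ineq := ⟨{.lt, .le}, by rintro (_ | _) <;> simp⟩

theorem finite_constOf_fiber [Finite X] (d : ℤ) :
    (Constr.constOf ⁻¹' {d} : Set (Constr X)).Finite := by
  have hupper := Set.finite_range fun p : X × Ineq => Constr.upper p.1 p.2 d.toNat
  have hlower := Set.finite_range fun p : X × Ineq => Constr.lower d.toNat p.2 p.1
  have hdiag := Set.finite_range fun p : X × X × Ineq => Constr.diag p.1 p.2.1 p.2.2 d
  refine ((hupper.union hlower).union hdiag).subset ?_
  rintro (⟨x, o, c⟩ | ⟨c, o, x⟩ | ⟨x, y, o, c⟩) rfl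
  · exact .inl (.inl ⟨(x, o), rfl⟩)
  · exact .inl (.inr ⟨(x, o), rfl⟩)
  · exact .inr ⟨(x, y, o), rfl⟩

theorem finite_boundedConstrs [Finite X] {D : Set ℤ} (hD : D.Finite) (N : ℕ) :
    (boundedConstrs X D N).Finite := by
  have hconsts : (D ∪ Set.Icc (-N : ℤ) N).Finite := hD.union (Set.finite_Icc _ _)
  refine (hconsts.preimage' fun d _ => finite_constOf_fiber d).subset fun φ hφ => ?_
  by_cases hdiag : φ.isDiag
  · exact .inl (hφ.1 hdiag)
  · have := hφ.2 hdiag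
    exact .inr ⟨by omega, by omega⟩

theorem finite_guardConsts {Q : Type} (A : UTA Q X) : (guardConsts A).Finite :=
  A.trans.finite_toSet.biUnion fun t _ => (UTrans.grd t).finite_toSet.image _

end Finiteness

section Invariant

variable {Q X : Type} {A : UTA Q X}

theorem mem_guardConsts {d : ℤ} :
    d ∈ guardConsts A ↔ ∃ t ∈ A.trans, ∃ ψ ∈ UTrans.grd t, Constr.constOf ψ = d := by
  simp only [guardConsts, Set.mem_iUnion₂, Set.mem_image, Finset.mem_coe, exists_prop]

theorem subset_boundedConstrs_of_isLeast_guardEqU [DecidableEq X] {G : Q → Set (Constr X)}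
    (hG : IsLeast {G | GuardEqU A G} G) {K L : ℕ}
    (hup : ∀ t ∈ A.trans, ∀ x, (UTrans.upd t x).IsShiftFree)
    (hK : ∀ t ∈ A.trans, ∀ φ ∈ UTrans.grd t, φ.constOf.natAbs ≤ K)
    (hL : ∀ t ∈ A.trans, ∀ x, updBound (UTrans.upd t x) ≤ L) (q : Q) :
    G q ⊆ boundedConstrs X (guardConsts A) (K + L) := by
  have hconsts : ∀ d ∈ guardConsts A, d.natAbs + L ≤ K + L := by
    intro d hd
    obtain ⟨t, ht, φ, hφ, rfl⟩ := mem_guardConsts.1 hd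
    exact Nat.add_le_add_right (hK t ht φ hφ) L
  refine subset_of_isLeast_guardEqU hG ?_ ?_ ?_ q
  · exact fun t ht φ hφ => ⟨fun _ => mem_guardConsts.2 ⟨t, ht, φ, hφ, rfl⟩,
      fun _ => Nat.le_add_right_of_le (hK t ht φ hφ)⟩
  · rintro _ ⟨x, rfl⟩
    exact ⟨nofun, fun _ => Nat.zero_le _⟩
  · exact fun t ht φ hφ => wpUpd_subset_boundedConstrs (hup t ht) (hL t ht) hconsts hφ

end Invariant

theorem stmt18_general {Q X : Type} [Finite X] [DecidableEq X] (A : UTA Q X)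
    (hupd : ∀ t ∈ A.trans, ∀ x : X, (UTrans.upd t x).IsShiftFree)
    (G : Q → Set (Constr X)) (hG : IsLeast {G | GuardEqU A G} G) (M : ℕ)
    (hM : ∀ t ∈ A.trans, (∀ φ ∈ UTrans.grd t, φ.constOf.natAbs ≤ M) ∧
      ∀ x : X, updBound (UTrans.upd t x) ≤ M) :
    (∀ q, ∀ φ ∈ G q,
        (φ.isDiag → ∃ t ∈ A.trans, ∃ ψ ∈ UTrans.grd t, Constr.constOf ψ = Constr.constOf φ) ∧
        (¬ φ.isDiag → φ.constOf.natAbs ≤ 2 * M)) ∧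
      (∀ q, (G q).Finite) := by
  have hbounded : ∀ q, G q ⊆ boundedConstrs X (guardConsts A) (2 * M) := by
    rw [two_mul]
    exact subset_boundedConstrs_of_isLeast_guardEqU hG hupd (fun t ht => (hM t ht).1)
      fun t ht => (hM t ht).2
  refine ⟨fun q φ hφ => ?_, fun q =>
    (finite_boundedConstrs (finite_guardConsts A) _).subset (hbounded q)⟩
  have ⟨hdiag, hnondiag⟩ := hbounded q hφ
  exact ⟨fun h => mem_guardConsts.1 (hdiag h), hnondiag⟩

theorem stmt18 {Q X : Type} [Fintype Q] [Fintype X] [DecidableEq X] (A : UTA Q X)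
    (hupd : ∀ t ∈ A.trans, ∀ x : X,
      (∃ c : ℕ, UTrans.upd t x = AtomicUp.const c) ∨
      (∃ y : X, UTrans.upd t x = AtomicUp.add y 0))
    (G : Q → Set (Constr X)) (hfix : GuardEqU A G)
    (hleast : ∀ G' : Q → Set (Constr X), GuardEqU A G' → ∀ q, G q ⊆ G' q)
    (M : ℕ)
    (hM : ∀ t ∈ A.trans, (∀ φ ∈ UTrans.grd t, φ.constOf.natAbs ≤ M) ∧
      ∀ x : X, updBound (UTrans.upd t x) ≤ M) :
    (∀ q, ∀ φ ∈ G q,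
        (φ.isDiag → ∃ t ∈ A.trans, ∃ ψ ∈ UTrans.grd t, Constr.constOf ψ = Constr.constOf φ) ∧
        (¬ φ.isDiag → φ.constOf.natAbs ≤ 2 * M)) ∧
      (∀ q, (G q).Finite) :=
  stmt18_general A hupd G ⟨hfix, hleast⟩ M hM
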